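/- arXiv:2009.09885 — 6 statements merged into one kernel-verified Lean document; each statement's English description precedes it below -/
import Mathlib

section
/- For every integer n ≥ 0, any Lie derivation D of L of type ε^∨_{2n+2} annihilates the bracket of the generators: D(⁅𝖺, 𝖻⁆) = 0. -/
open scoped BigOperators

noncomputable section

/-- The free Lie algebra over ℚ on two generators. -/
abbrev L2 : Type := FreeLieAlgebra ℚ (Fin 2)

/-- The first generator 𝖺 of the free Lie algebra. -/
def ga : L2 := FreeLieAlgebra.of ℚ 0

/-- The second generator 𝖻 of the free Lie algebra. -/
def gb : L2 := FreeLieAlgebra.of ℚ 1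

/-- The adjoint action `ad x : y ↦ ⁅x, y⁆` on the free Lie algebra. -/
def adL (x : L2) : Module.End ℚ L2 := LieAlgebra.ad ℚ L2 x

/-- A Lie derivation `D` of `L2` is of type `ε^∨_{2n+2}` if
`D 𝖺 = ad(𝖺)^{2n+2} 𝖻` and
`D 𝖻 = (1/2) ∑_{i+j=2n+1} (-1)^i ⁅ad(𝖺)^i 𝖻, ad(𝖺)^j 𝖻⁆`. -/
def IsEpsDual (n : ℕ) (D : LieDerivation ℚ L2 L2) : Prop :=
  D ga = (adL ga ^ (2 * n + 2)) gb ∧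
  D gb = (1 / 2 : ℚ) • ∑ i ∈ Finset.range (2 * n + 2),
    ((-1 : ℚ)) ^ i • ⁅(adL ga ^ i) gb, (adL ga ^ (2 * n + 1 - i)) gb⁆

/-- A Lie derivation `D` of `L2` is of type `ε_{2n+2}` (the conjugate of `ε^∨_{2n+2}` by
the automorphism `𝖺 ↦ 𝖻, 𝖻 ↦ -𝖺`). -/
def IsEps (n : ℕ) (D : LieDerivation ℚ L2 L2) : Prop :=
  D ga = -((1 / 2 : ℚ) • ∑ i ∈ Finset.range (2 * n + 2),
    ((-1 : ℚ)) ^ i • ⁅(adL gb ^ i) ga, (adL gb ^ (2 * n + 1 - i)) ga⁆) ∧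
  D gb = -((adL gb ^ (2 * n + 2)) ga)

/-- A Lie derivation is of type `ε₀^∨` if it sends `𝖺 ↦ 𝖻` and `𝖻 ↦ 0`. -/
def IsEpsZeroDual (D : LieDerivation ℚ L2 L2) : Prop :=
  D ga = gb ∧ D gb = 0

/-- A Lie derivation is of type `ε₀` if it sends `𝖺 ↦ 0` and `𝖻 ↦ -𝖺`. -/
def IsEpsZero (D : LieDerivation ℚ L2 L2) : Prop :=
  D ga = 0 ∧ D gb = -ga


theorem epsDual_annihilates_theta (n : ℕ) (D : LieDerivation ℚ L2 L2)
    (hD : IsEpsDual n D) :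
    D ⁅ga, gb⁆ = 0 := by
  obtain ⟨h1, h2⟩ := hD
  have hs : ∀ k, ⁅ga, (adL ga ^ k) gb⁆ = (adL ga ^ (k + 1)) gb := by
    intro k
    rw [pow_succ']
    rfl
  have key : ⁅ga, ∑ i ∈ Finset.range (2 * n + 2),
      ((-1 : ℚ)) ^ i • ⁅(adL ga ^ i) gb, (adL ga ^ (2 * n + 1 - i)) gb⁆⁆
      = (-2 : ℚ) • ⁅(adL ga ^ (2 * n + 2)) gb, gb⁆ := by
    rw [lie_sum]
    have h : ∀ i ∈ Finset.range (2 * n + 2),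
        ⁅ga, ((-1 : ℚ)) ^ i • ⁅(adL ga ^ i) gb, (adL ga ^ (2 * n + 1 - i)) gb⁆⁆
        = ((-1 : ℚ)) ^ i • ⁅(adL ga ^ i) gb, (adL ga ^ (2 * n + 2 - i)) gb⁆
          - ((-1 : ℚ)) ^ (i + 1) •
            ⁅(adL ga ^ (i + 1)) gb, (adL ga ^ (2 * n + 2 - (i + 1))) gb⁆ := by
      intro i hi
      have hi' := Finset.mem_range.1 hi
      have e1 : 2 * n + 2 - i = (2 * n + 1 - i) + 1 := by omega
      have e2 : 2 * n + 2 - (i + 1) = 2 * n + 1 - i := by omega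
      rw [lie_smul, leibniz_lie, hs, hs, e1, e2, pow_succ (-1 : ℚ) i]
      module
    rw [Finset.sum_congr rfl h, Finset.sum_range_sub'
      (fun i => ((-1 : ℚ)) ^ i • ⁅(adL ga ^ i) gb, (adL ga ^ (2 * n + 2 - i)) gb⁆)]
    have e : ((-1 : ℚ)) ^ (2 * n + 2) = 1 := Even.neg_one_pow ⟨n + 1, by ring⟩
    simp only [e, Nat.sub_self, Nat.sub_zero, pow_zero, Module.End.one_apply]
    rw [← lie_skew gb]
    module
  rw [LieDerivation.apply_lie_eq_add, h1, h2, lie_smul, key]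
  module
end
end

section
/- Let n ≥ 1, let D be a Lie derivation of L of type ε^∨_{2n+2}, and let D₀^∨ be a Lie derivation of type ε₀^∨. Then the (2n+1)-fold iterated bracket vanishes: ⁅D₀^∨, ⁅D₀^∨, …, ⁅D₀^∨, D⁆…⁆⁆ = 0 (i.e., (ad D₀^∨)^{2n+1}(D) = 0 in the Lie algebra of Lie derivations of L). -/
open scoped BigOperators

noncomputable section

/-- The Lie algebra `L ⊕ εL` with `ε² = 0`. -/
def TanL : Type := L2 × L2

instance : AddCommGroup TanL := inferInstanceAs (AddCommGroup (L2 × L2))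

instance : Module ℚ TanL := inferInstanceAs (Module ℚ (L2 × L2))

instance : Bracket TanL TanL := ⟨fun x y => (⁅x.1, y.1⁆, ⁅x.1, y.2⁆ + ⁅x.2, y.1⁆)⟩

theorem TanL.ext {x y : TanL} (h1 : x.1 = y.1) (h2 : x.2 = y.2) : x = y := Prod.ext h1 h2

theorem TanL.add_fst (x y : TanL) : (x + y).1 = x.1 + y.1 := rfl

theorem TanL.add_snd (x y : TanL) : (x + y).2 = x.2 + y.2 := rfl

theorem TanL.smul_fst (c : ℚ) (x : TanL) : (c • x).1 = c • x.1 := rfl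

theorem TanL.smul_snd (c : ℚ) (x : TanL) : (c • x).2 = c • x.2 := rfl

theorem TanL.lie_fst (x y : TanL) : ⁅x, y⁆.1 = ⁅x.1, y.1⁆ := rfl

theorem TanL.lie_snd (x y : TanL) : ⁅x, y⁆.2 = ⁅x.1, y.2⁆ + ⁅x.2, y.1⁆ := rfl

instance : LieRing TanL where
  add_lie x y z := by
    apply TanL.ext
    · simp only [TanL.lie_fst, TanL.add_fst, add_lie]
    · simp only [TanL.lie_snd, TanL.add_fst, TanL.add_snd, add_lie]; abel
  lie_add x y z := by
    apply TanL.ext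
    · simp only [TanL.lie_fst, TanL.add_fst, lie_add]
    · simp only [TanL.lie_snd, TanL.add_fst, TanL.add_snd, lie_add]; abel
  lie_self x := by
    apply TanL.ext
    · exact lie_self x.1
    · change ⁅x.1, x.2⁆ + ⁅x.2, x.1⁆ = 0
      rw [← lie_skew x.1 x.2]; abel
  leibniz_lie x y z := by
    apply TanL.ext
    · simp only [TanL.lie_fst, TanL.add_fst]; exact leibniz_lie _ _ _
    · simp only [TanL.lie_snd, TanL.lie_fst, TanL.add_snd, lie_add, add_lie]
      rw [leibniz_lie x.1 y.1 z.2, leibniz_lie x.1 y.2 z.1, leibniz_lie x.2 y.1 z.1]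
      abel

instance : LieAlgebra ℚ TanL where
  lie_smul c x y := by
    apply TanL.ext
    · simp only [TanL.lie_fst, TanL.smul_fst, lie_smul]
    · simp only [TanL.lie_snd, TanL.smul_fst, TanL.smul_snd, lie_smul, smul_add]

/-- The homomorphism `x ↦ x + ε D x`. -/
def tanHom (D : LieDerivation ℚ L2 L2) : L2 →ₗ⁅ℚ⁆ TanL where
  toFun x := (x, D x)
  map_add' x y := TanL.ext rfl (map_add D x y)
  map_smul' c x := TanL.ext rfl (map_smul D c x)
  map_lie' {x y} := TanL.ext rfl (D.apply_lie_eq_add x y)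

theorem der_ext {D E : LieDerivation ℚ L2 L2} (ha : D ga = E ga) (hb : D gb = E gb) : D = E := by
  have h : tanHom D = tanHom E := by
    apply FreeLieAlgebra.hom_ext
    intro x
    fin_cases x
    · exact TanL.ext rfl ha
    · exact TanL.ext rfl hb
  ext x
  exact congrArg (fun F : L2 →ₗ⁅ℚ⁆ TanL => (F x).2) h

/-- Projection `x + ε y ↦ x`. -/
def tanFst : TanL →ₗ⁅ℚ⁆ L2 where
  toFun x := x.1
  map_add' _ _ := rfl
  map_smul' _ _ := rfl
  map_lie' := rfl

theorem exists_der (u v : L2) : ∃ D : LieDerivation ℚ L2 L2, D ga = u ∧ D gb = v := by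
  let g : Fin 2 → TanL := ![((ga, u) : L2 × L2), ((gb, v) : L2 × L2)]
  let F : L2 →ₗ⁅ℚ⁆ TanL := FreeLieAlgebra.lift ℚ g
  have hFa : F ga = ((ga, u) : L2 × L2) := FreeLieAlgebra.lift_of_apply g 0
  have hFb : F gb = ((gb, v) : L2 × L2) := FreeLieAlgebra.lift_of_apply g 1
  have h1 : tanFst.comp F = LieHom.id := by
    apply FreeLieAlgebra.hom_ext
    intro x
    fin_cases x
    · exact congrArg Prod.fst hFa
    · exact congrArg Prod.fst hFb
  have h1' : ∀ x, (F x).1 = x := fun x => congrArg (fun G : L2 →ₗ⁅ℚ⁆ L2 => G x) h1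
  refine ⟨{ toFun := fun x => (F x).2
            map_add' := fun x y => by rw [map_add]; rfl
            map_smul' := fun c x => by rw [map_smul]; rfl
            leibniz' := fun x y => ?_ }, ?_, ?_⟩
  · change (F ⁅x, y⁆).2 = ⁅x, (F y).2⁆ - ⁅y, (F x).2⁆
    rw [LieHom.map_lie, TanL.lie_snd, h1', h1', ← lie_skew y (F x).2]; abel
  · exact congrArg Prod.snd hFa
  · exact congrArg Prod.snd hFb

theorem nil_lie (f : LieDerivation ℚ L2 L2) : ∀ (K N M : ℕ) (x y : L2), N + M = K →
    f^[N] x = 0 → f^[M] y = 0 → f^[K] ⁅x, y⁆ = 0 := by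
  have hz : ∀ k, f^[k] 0 = 0 := fun k => Function.iterate_fixed (map_zero f) k
  have hadd : ∀ k (x y : L2), f^[k] (x + y) = f^[k] x + f^[k] y := fun k x y =>
    iterate_map_add f k x y
  intro K
  induction K with
  | zero =>
    intro N M x y h hx hy
    obtain rfl : N = 0 := by omega
    simp only [Function.iterate_zero, id] at hx
    simp [hx]
  | succ K ih =>
    intro N M x y h hx hy
    rcases N with _ | N
    · simp only [Function.iterate_zero, id] at hx
      rw [hx, zero_lie, hz]
    rcases M with _ | M
    · simp only [Function.iterate_zero, id] at hy
      rw [hy, lie_zero, hz]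
    rw [Function.iterate_succ_apply, f.apply_lie_eq_add, hadd,
      ih (N + 1) M x (f y) (by omega) hx (by rwa [Function.iterate_succ_apply] at hy),
      ih N (M + 1) (f x) y (by omega) (by rwa [Function.iterate_succ_apply] at hx) hy, add_zero]

theorem adL_succ (k : ℕ) : (adL ga ^ (k + 1)) gb = ⁅ga, (adL ga ^ k) gb⁆ := by
  rw [pow_succ']; rfl

theorem nil_ad (f : LieDerivation ℚ L2 L2) (hf : IsEpsZeroDual f) (k : ℕ) :
    f^[2 * k + 1] ((adL ga ^ k) gb) = 0 := by
  induction k with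
  | zero => simpa using hf.2
  | succ k ih =>
    rw [adL_succ]
    refine nil_lie f _ 2 (2 * k + 1) _ _ (by ring) ?_ ih
    simp [hf.1, hf.2]

theorem e_ad (e : LieDerivation ℚ L2 L2) (ha : e ga = 0) (hb : e gb = ga) (k : ℕ) :
    e ((adL ga ^ (k + 1)) gb) = 0 := by
  induction k with
  | zero => rw [adL_succ, e.apply_lie_eq_add]; simp [ha, hb]
  | succ k ih => rw [adL_succ, e.apply_lie_eq_add, ih, ha]; simp

theorem h_ad (h : LieDerivation ℚ L2 L2) (ha : h ga = ga) (hb : h gb = -gb) (k : ℕ) :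
    h ((adL ga ^ k) gb) = ((k : ℚ) - 1) • (adL ga ^ k) gb := by
  induction k with
  | zero => simp [hb]
  | succ k ih =>
    rw [adL_succ, h.apply_lie_eq_add, ih, ha, lie_smul]
    push_cast
    module

theorem e_gb (n : ℕ) (D e : LieDerivation ℚ L2 L2) (hD : IsEpsDual n D)
    (ha : e ga = 0) (hb : e gb = ga) : e (D gb) = D ga := by
  rw [hD.1, hD.2, map_smul, map_sum]
  simp only [map_smul, e.apply_lie_eq_add, smul_add, Finset.sum_add_distrib]
  rw [Finset.sum_eq_single (2 * n + 1), Finset.sum_eq_single 0]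
  · rw [Nat.sub_self, Nat.sub_zero, adL_succ (2 * n + 1), pow_zero]
    simp only [Module.End.one_apply, hb]
    rw [← lie_skew ga, pow_succ (-1 : ℚ), pow_mul]
    simp only [even_two, Even.neg_pow, one_pow]
    module
  · intro i _ hi
    obtain ⟨k, rfl⟩ := Nat.exists_eq_succ_of_ne_zero hi
    rw [Nat.succ_eq_add_one, e_ad e ha hb]; simp
  · simp
  · intro i hi hi'
    rw [Finset.mem_range] at hi
    obtain ⟨k, hk⟩ := Nat.exists_eq_succ_of_ne_zero (show 2 * n + 1 - i ≠ 0 by omega)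
    rw [hk, Nat.succ_eq_add_one, e_ad e ha hb]; simp
  · simp

theorem h_gb (n : ℕ) (D h : LieDerivation ℚ L2 L2) (hD : IsEpsDual n D)
    (ha : h ga = ga) (hb : h gb = -gb) : h (D gb) = (2 * n - 1 : ℚ) • D gb := by
  rw [hD.2, map_smul, map_sum, smul_comm (2 * n - 1 : ℚ)]
  congr 1
  rw [Finset.smul_sum]
  refine Finset.sum_congr rfl fun i hi => ?_
  rw [Finset.mem_range] at hi
  rw [map_smul, h.apply_lie_eq_add, h_ad h ha hb, h_ad h ha hb, lie_smul, smul_lie,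
    Nat.cast_sub (by omega)]
  push_cast
  module

theorem nil_D (n : ℕ) (D f : LieDerivation ℚ L2 L2) (hD : IsEpsDual n D)
    (hf : IsEpsZeroDual f) :
    ∃ N, (LieAlgebra.ad ℚ (LieDerivation ℚ L2 L2) f ^ N) D = 0 := by
  set w : ℕ → LieDerivation ℚ L2 L2 :=
    fun N => (LieAlgebra.ad ℚ (LieDerivation ℚ L2 L2) f ^ N) D with hw
  have hs : ∀ N, w (N + 1) = ⁅f, w N⁆ := fun N => by
    change (LieAlgebra.ad ℚ (LieDerivation ℚ L2 L2) f ^ (N + 1)) D = _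
    rw [pow_succ']; rfl
  have hz : ∀ k, f^[k] 0 = 0 := fun k => Function.iterate_fixed (map_zero f) k
  have hwb : ∀ N, w N gb = f^[N] (D gb) := by
    intro N
    induction N with
    | zero => simp [hw]
    | succ N ih =>
      rw [hs, LieDerivation.commutator_apply, ih, hf.2, map_zero, sub_zero,
        Function.iterate_succ_apply']
  obtain ⟨P, hP⟩ : ∃ P, ∀ N, f^[P + N] (D gb) = 0 := by
    refine ⟨2 * (2 * n + 1) + 2, fun N => ?_⟩
    have hlin : ∀ k (x : L2), f^[k] x = (((f : L2 →ₗ[ℚ] L2) ^ k : Module.End ℚ L2)) x := by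
      intro k x
      rw [Module.End.pow_apply]; rfl
    have h0 : f^[2 * (2 * n + 1) + 2] (D gb) = 0 := by
      rw [hD.2, hlin, map_smul, map_sum]
      rw [Finset.sum_eq_zero, smul_zero]
      intro i hi
      rw [Finset.mem_range] at hi
      rw [map_smul, ← hlin, nil_lie f _ (2 * i + 1) (2 * (2 * n + 1 - i) + 1) _ _ (by omega)
        (nil_ad f hf _) (nil_ad f hf _), smul_zero]
    rw [Nat.add_comm, Function.iterate_add_apply, h0, hz]
  have hwa : ∀ N, w (P + N) ga = f^[N] (w P ga) := by
    intro N
    induction N with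
    | zero => simp
    | succ N ih =>
      rw [← Nat.add_assoc, hs, LieDerivation.commutator_apply, ih, hf.1, hwb, hP, sub_zero,
        Function.iterate_succ_apply']
  have hna : ∀ N, ∃ Q, f^[Q] (w N ga) = 0 := by
    intro N
    induction N with
    | zero => exact ⟨2 * (2 * n + 2) + 1, by simpa [hw, hD.1] using nil_ad f hf (2 * n + 2)⟩
    | succ N ih =>
      obtain ⟨Q, hQ⟩ := ih
      refine ⟨Q + P, ?_⟩
      rw [hs, LieDerivation.commutator_apply, hf.1, hwb, iterate_map_sub,
        ← Function.iterate_add_apply, show Q + P + N = P + (Q + N) by ring, hP, sub_zero,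
        ← Function.iterate_succ_apply, show (Q + P).succ = (P + 1) + Q by omega,
        Function.iterate_add_apply, hQ, hz]
  obtain ⟨Q, hQ⟩ := hna P
  refine ⟨P + Q, der_ext ?_ ?_⟩
  · exact (hwa Q).trans hQ
  · exact (hwb _).trans (hP Q)

theorem epsDual_nilpotency (n : ℕ) (hn : 1 ≤ n)
    (D D0 : LieDerivation ℚ L2 L2)
    (hD : IsEpsDual n D) (hD0 : IsEpsZeroDual D0) :
    (LieAlgebra.ad ℚ (LieDerivation ℚ L2 L2) D0 ^ (2 * n + 1)) D = 0 := by
  obtain ⟨e, hea, heb⟩ := exists_der 0 ga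
  obtain ⟨hfa, hfb⟩ := id hD0
  obtain ⟨h, hh⟩ : ∃ h, h = ⁅e, D0⁆ := ⟨_, rfl⟩
  have hha : h ga = ga := by rw [hh, LieDerivation.commutator_apply, hfa, heb, hea]; simp
  have hhb : h gb = -gb := by rw [hh, LieDerivation.commutator_apply, hfb, heb, hfa]; simp
  have heD : ⁅e, D⁆ = 0 := by
    apply der_ext
    · rw [LieDerivation.commutator_apply, hea, hD.1, e_ad e hea heb]; simp
    · rw [LieDerivation.commutator_apply, heb, e_gb n D e hD hea heb]; simp
  have hhD : ⁅h, D⁆ = (2 * n : ℚ) • D := by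
    apply der_ext
    · rw [LieDerivation.commutator_apply, hha, LieDerivation.smul_apply, hD.1, h_ad h hha hhb]
      push_cast
      module
    · rw [LieDerivation.commutator_apply, hhb, LieDerivation.smul_apply, h_gb n D h hD hha hhb,
        map_neg]
      module
  have hn0 : (2 * n : ℚ) ≠ 0 := by positivity
  by_cases hD00 : D = 0
  · simp [hD00]
  have t : IsSl2Triple h e D0 := by
    refine ⟨?_, hh.symm, ?_, ?_⟩
    · intro h0
      rw [h0, zero_lie] at hhD
      exact (smul_ne_zero hn0 hD00) hhD.symm
    · rw [two_smul]
      apply der_ext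
      · rw [LieDerivation.commutator_apply, LieDerivation.add_apply, hha, hea]; simp
      · rw [LieDerivation.commutator_apply, LieDerivation.add_apply, hhb, heb, hha]; simp [heb]
    · rw [two_smul]
      apply der_ext
      · rw [LieDerivation.commutator_apply, LieDerivation.neg_apply, LieDerivation.add_apply,
          hha, hfa, hhb]; abel
      · rw [LieDerivation.commutator_apply, LieDerivation.neg_apply, LieDerivation.add_apply,
          hhb, hfb]; simp [hfb]
  have P : t.HasPrimitiveVectorWith D (2 * n : ℚ) := ⟨hD00, hhD, heD⟩
  have key : ∀ k, (LieAlgebra.ad ℚ (LieDerivation ℚ L2 L2) D0 ^ (2 * n + 1 + k)) D = 0 →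
      (LieAlgebra.ad ℚ (LieDerivation ℚ L2 L2) D0 ^ (2 * n + 1)) D = 0 := by
    intro k
    induction k with
    | zero => exact fun h => h
    | succ k ih =>
      intro hk
      apply ih
      have h1 := P.lie_e_pow_succ_toEnd_f (2 * n + 1 + k)
      have hk' : ((LieModule.toEnd ℚ (LieDerivation ℚ L2 L2) (LieDerivation ℚ L2 L2) D0) ^
        (2 * n + 1 + k + 1)) D = 0 := hk
      rw [hk', lie_zero] at h1
      refine (smul_eq_zero.mp h1.symm).resolve_left ?_
      push_cast
      refine mul_ne_zero (by positivity) ?_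
      have : (0 : ℚ) ≤ k := by positivity
      intro h2
      linarith
  obtain ⟨N, hN⟩ := nil_D n D D0 hD hD0
  apply key N
  rw [pow_add, Module.End.mul_apply, hN, map_zero]
end
end

section
/- Let n ≥ 1, let D be a Lie derivation of L of type ε^∨_{2n+2}, and let D₀^∨ be a Lie derivation of type ε₀^∨. Then the 2n+1 Lie derivations (ad D₀^∨)^k(D) for k = 0, 1, …, 2n are linearly independent over ℚ in the ℚ-module of Lie derivations of L. -/
open scoped BigOperators

noncomputable section

/-- The target matrix algebra. -/
abbrev MX : Type := Matrix (Fin 2) (Fin 2) (Polynomial ℚ)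

instance instLieRingMX : LieRing MX := LieRing.ofAssociativeRing

instance instLieAlgebraMX : LieAlgebra ℚ MX := LieAlgebra.ofAssociativeAlgebra

/-- Image of the second generator. -/
def mB : MX := !![1, 0; 0, 0]

/-- The off-diagonal unit. -/
def mE : MX := !![0, 1; 0, 0]

/-- Image of the first generator. -/
def mA : MX := !![Polynomial.X, 1; 0, 0]

/-- The representation. -/
def phi : L2 →ₗ⁅ℚ⁆ MX := FreeLieAlgebra.lift ℚ (fun i : Fin 2 => if i = 0 then mA else mB)

lemma phi_ga : phi ga = mA := by simp [phi, ga]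
lemma phi_gb : phi gb = mB := by simp [phi, gb]

/-- Entrywise derivative. -/
def dM : MX →ₗ[ℚ] MX where
  toFun M := M.map Polynomial.derivative
  map_add' x y := by ext i j : 2; simp
  map_smul' c x := by ext i j : 2; simp

lemma dM_lie (x y : MX) : dM ⁅x, y⁆ = ⁅dM x, y⁆ + ⁅x, dM y⁆ := by
  ext i j : 2
  simp [dM, Ring.lie_def, Matrix.mul_apply, Fin.sum_univ_two]
  ring

/-- The elements on which `D0` corresponds to the derivative. -/
def goodSub (D0 : LieDerivation ℚ L2 L2) : LieSubalgebra ℚ L2 where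
  carrier := {x | phi (D0 x) = dM (phi x)}
  add_mem' := by
    intro x y hx hy
    change phi (D0 x) = dM (phi x) at hx
    change phi (D0 y) = dM (phi y) at hy
    change phi (D0 (x + y)) = dM (phi (x + y))
    rw [map_add, map_add, map_add, map_add, hx, hy]
  zero_mem' := by
    change phi (D0 0) = dM (phi 0)
    rw [map_zero, map_zero, map_zero]
  smul_mem' := by
    intro c x hx
    change phi (D0 x) = dM (phi x) at hx
    change phi (D0 (c • x)) = dM (phi (c • x))
    rw [map_smul, map_smul, map_smul, map_smul, hx]
  lie_mem' := by
    intro x y hx hy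
    change phi (D0 x) = dM (phi x) at hx
    change phi (D0 y) = dM (phi y) at hy
    change phi (D0 ⁅x, y⁆) = dM (phi ⁅x, y⁆)
    rw [LieDerivation.apply_lie_eq_add, map_add, LieHom.map_lie, LieHom.map_lie, LieHom.map_lie,
      dM_lie, hx, hy, add_comm]

lemma phi_D0 (D0 : LieDerivation ℚ L2 L2) (h : IsEpsZeroDual D0) (x : L2) :
    phi (D0 x) = dM (phi x) := by
  have ha : ga ∈ goodSub D0 := by
    change phi (D0 ga) = dM (phi ga)
    rw [h.1, phi_ga, phi_gb]
    ext i j : 2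
    fin_cases i <;> fin_cases j <;> simp [dM, mA, mB]
  have hb : gb ∈ goodSub D0 := by
    change phi (D0 gb) = dM (phi gb)
    rw [h.2, phi_gb]
    ext i j : 2
    fin_cases i <;> fin_cases j <;> simp [dM, mB]
  let f : L2 →ₗ⁅ℚ⁆ goodSub D0 :=
    FreeLieAlgebra.lift ℚ (fun i : Fin 2 => if i = 0 then ⟨ga, ha⟩ else ⟨gb, hb⟩)
  have hf : (goodSub D0).incl.comp f = LieHom.id := by
    apply FreeLieAlgebra.hom_ext
    intro i
    fin_cases i <;> simp [f, ga, gb]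
  have hx := LieHom.congr_fun hf x
  have h2 : ((f x : goodSub D0) : L2) = x := by simpa using hx
  have h3 := (f x).2
  rw [h2] at h3
  exact h3

lemma phi_ad (i : ℕ) : phi ((adL ga ^ (i + 1)) gb) = (!![0, -Polynomial.X ^ i; 0, 0] : MX) := by
  induction i with
  | zero =>
    simp only [zero_add, pow_one, adL, LieAlgebra.ad_apply, LieHom.map_lie, phi_ga, phi_gb]
    ext i j : 2
    fin_cases i <;> fin_cases j <;> simp [mA, mB, Ring.lie_def]
  | succ k ih =>
    rw [pow_succ', Module.End.mul_apply]
    change phi ⁅ga, (adL ga ^ (k + 1)) gb⁆ = _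
    rw [LieHom.map_lie, ih, phi_ga]
    refine Matrix.ext fun i j => ?_
    fin_cases i <;> fin_cases j <;> simp [mA, Ring.lie_def, pow_succ']

lemma phi_Db (n : ℕ) (D : LieDerivation ℚ L2 L2) (hD : IsEpsDual n D) :
    phi (D gb) = (!![0, -Polynomial.X ^ (2 * n); 0, 0] : MX) := by
  rw [hD.2, map_smul, map_sum, Finset.sum_range_succ, Finset.sum_range_succ',
    Finset.sum_eq_zero]
  · have e1 : phi ((adL ga ^ 0) gb) = mB := by simp [phi_gb]
    have h2 : (2 * n + 1 - 0) = 2 * n + 1 := rfl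
    simp only [map_smul, LieHom.map_lie, e1, h2, phi_ad, Nat.sub_self]
    have h3 : (-1 : ℚ) ^ (2 * n + 1) = -1 := by rw [pow_succ, pow_mul]; simp
    rw [h3]
    ext i j : 2
    fin_cases i <;> fin_cases j <;> simp [mB, Ring.lie_def]
    split_ifs <;> norm_num
  · intro k hk
    rw [Finset.mem_range] at hk
    obtain ⟨m, hm⟩ : ∃ m, 2 * n + 1 - (k + 1) = m + 1 := ⟨2 * n - k - 1, by omega⟩
    rw [map_smul, LieHom.map_lie, hm, phi_ad, phi_ad]
    ext i j : 2
    fin_cases i <;> fin_cases j <;> simp [Ring.lie_def]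

lemma phi_iter (n : ℕ) (D D0 : LieDerivation ℚ L2 L2)
    (hD : IsEpsDual n D) (hD0 : IsEpsZeroDual D0) (k : ℕ) :
    phi (((LieAlgebra.ad ℚ (LieDerivation ℚ L2 L2) D0 ^ k) D) gb) =
      (!![0, Polynomial.derivative^[k] (-Polynomial.X ^ (2 * n)); 0, 0] : MX) := by
  induction k with
  | zero => simpa using phi_Db n D hD
  | succ k ih =>
    rw [pow_succ', Module.End.mul_apply, LieAlgebra.ad_apply, LieDerivation.commutator_apply,
      hD0.2, map_zero, sub_zero, phi_D0 D0 hD0, ih, Function.iterate_succ_apply']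
    ext i j : 2
    fin_cases i <;> fin_cases j <;> simp [dM]

theorem epsDual_linearIndependent (n : ℕ) (hn : 1 ≤ n)
    (D D0 : LieDerivation ℚ L2 L2)
    (hD : IsEpsDual n D) (hD0 : IsEpsZeroDual D0) :
    LinearIndependent ℚ (fun k : Fin (2 * n + 1) =>
      (LieAlgebra.ad ℚ (LieDerivation ℚ L2 L2) D0 ^ (k : ℕ)) D) := by
  let ev : LieDerivation ℚ L2 L2 →ₗ[ℚ] Polynomial ℚ :=
    { toFun := fun E => phi (E gb) 0 1
      map_add' := by intro x y; simp
      map_smul' := by intro c x; simp }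
  have hev : ∀ k : ℕ, ev ((LieAlgebra.ad ℚ (LieDerivation ℚ L2 L2) D0 ^ k) D) =
      Polynomial.derivative^[k] (-Polynomial.X ^ (2 * n)) := by
    intro k
    change phi (((LieAlgebra.ad ℚ (LieDerivation ℚ L2 L2) D0 ^ k) D) gb) 0 1 = _
    rw [phi_iter n D D0 hD hD0]
    simp
  rw [Fintype.linearIndependent_iff]
  intro g hg k
  have h1 := congrArg (fun p => (ev p).coeff (2 * n - k)) hg
  simp only [map_sum, map_smul, hev, map_zero, Polynomial.finsetSum_coeff, Polynomial.coeff_smul,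
    Polynomial.coeff_zero, Polynomial.iterate_derivative_neg,
    Polynomial.iterate_derivative_X_pow_eq_smul, Polynomial.coeff_neg, Polynomial.coeff_X_pow] at h1
  rw [Finset.sum_eq_single k] at h1
  · have h2 : ((2 * n).descFactorial k : ℚ) ≠ 0 := by
      have := k.2
      rw [Nat.cast_ne_zero, Ne, Nat.descFactorial_eq_zero_iff_lt]
      omega
    simpa [h2] using h1
  · intro j _ hj
    have h3 : 2 * n - (k : ℕ) ≠ 2 * n - (j : ℕ) := by
      have := k.2
      have := j.2
      intro h
      apply hj
      ext
      omega
    simp [h3]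
  · simp
end
end

section
/- Let n ≥ 1, let D be a Lie derivation of L of type ε^∨_{2n+2}, and let D₀ be a Lie derivation of type ε₀. Then D is a highest-weight vector for the lowering operator: ⁅D₀, D⁆ = 0 in the Lie algebra of Lie derivations of L. -/
open scoped BigOperators

noncomputable section

lemma lieSpan_gens : LieSubalgebra.lieSpan ℚ L2 ({ga, gb} : Set L2) = ⊤ := by
  set S := LieSubalgebra.lieSpan ℚ L2 ({ga, gb} : Set L2) with hS
  have hmem : ∀ i : Fin 2, FreeLieAlgebra.of ℚ i ∈ S := by
    intro i
    apply LieSubalgebra.subset_lieSpan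
    fin_cases i
    · exact Or.inl rfl
    · exact Or.inr rfl
  let f : L2 →ₗ⁅ℚ⁆ S := FreeLieAlgebra.lift ℚ (fun i => ⟨FreeLieAlgebra.of ℚ i, hmem i⟩)
  have hf : S.incl.comp f = LieHom.id := by
    apply FreeLieAlgebra.hom_ext
    intro i
    simp [f]
  rw [eq_top_iff]
  intro x _
  have hx : ((f x : S) : L2) = x := by
    simpa using congrArg (fun g : L2 →ₗ⁅ℚ⁆ L2 => g x) hf
  rw [← hx]
  exact (f x).2

lemma adL_pow_succ' (k : ℕ) (x : L2) :
    (adL ga ^ (k + 1)) x = ⁅ga, (adL ga ^ k) x⁆ := by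
  rw [pow_succ']
  rfl

lemma eps0_ad (D0 : LieDerivation ℚ L2 L2) (h : IsEpsZero D0) (k : ℕ) :
    D0 ((adL ga ^ (k + 1)) gb) = 0 := by
  induction k with
  | zero => rw [adL_pow_succ', LieDerivation.apply_lie_eq_add]; simp [h.1, h.2]
  | succ k ih => rw [adL_pow_succ', LieDerivation.apply_lie_eq_add, ih]; simp [h.1]

theorem epsDual_highest_weight (n : ℕ) (hn : 1 ≤ n)
    (D D0 : LieDerivation ℚ L2 L2)
    (hD : IsEpsDual n D) (hD0 : IsEpsZero D0) :
    ⁅D0, D⁆ = 0 := by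
  apply LieDerivation.ext_of_lieSpan_eq_top _ lieSpan_gens
  rintro x (rfl | hx)
  · rw [LieDerivation.commutator_apply, hD.1, hD0.1, eps0_ad D0 hD0]
    simp
  · rw [Set.mem_singleton_iff] at hx
    subst hx
    rw [LieDerivation.commutator_apply, hD.2, hD0.2, map_neg, hD.1, map_smul, map_sum,
      Finset.sum_range_succ, Finset.sum_range_succ']
    have hz : ∀ i ∈ Finset.range (2 * n), D0 ((-1 : ℚ) ^ (i + 1) •
        ⁅(adL ga ^ (i + 1)) gb, (adL ga ^ (2 * n + 1 - (i + 1))) gb⁆) = 0 := by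
      intro i hi
      rw [Finset.mem_range] at hi
      obtain ⟨k, hk⟩ : ∃ k, 2 * n + 1 - (i + 1) = k + 1 := ⟨2 * n - i - 1, by omega⟩
      rw [hk, map_smul, LieDerivation.apply_lie_eq_add, eps0_ad D0 hD0, eps0_ad D0 hD0]
      simp
    rw [Finset.sum_eq_zero hz, map_smul, map_smul, LieDerivation.apply_lie_eq_add,
      LieDerivation.apply_lie_eq_add, Nat.sub_zero, Nat.sub_self, eps0_ad D0 hD0,
      adL_pow_succ' (2 * n + 1)]
    have hodd : (-1 : ℚ) ^ (2 * n + 1) = -1 := by rw [pow_succ, pow_mul]; simp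
    rw [hodd]
    simp only [pow_zero, Module.End.one_apply, hD0.2]
    rw [← lie_skew ((adL ga ^ (2 * n + 1)) gb) (-ga)]
    simp only [neg_lie, lie_zero, zero_lie, LieDerivation.coe_zero, Pi.zero_apply]
    module
end
end

section
/- Let D₄, D₆, D₈, D₁₀ be Lie derivations of L of types ε^∨_{4}, ε^∨_{6}, ε^∨_{8}, ε^∨_{10} respectively (i.e., the cases n = 1, 2, 3, 4). Then the Pollack relation ⁅D₁₀, D₄⁆ − 3 • ⁅D₈, D₆⁆ = 0 holds in the Lie algebra of Lie derivations of L. -/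
open scoped BigOperators

noncomputable section

set_option linter.unusedSimpArgs false

/-- `B i = ad(a)^i b`. -/
def B (i : ℕ) : L2 := (adL ga ^ i) gb

/-- Double brackets. -/
def P (i j : ℕ) : L2 := ⁅B i, B j⁆

/-- Triple brackets. -/
def T (i j k : ℕ) : L2 := ⁅B i, P j k⁆

theorem B_def (i : ℕ) : B i = (adL ga ^ i) gb := rfl
theorem P_def (i j : ℕ) : P i j = ⁅B i, B j⁆ := rfl
theorem T_def (i j k : ℕ) : T i j k = ⁅B i, P j k⁆ := rfl
theorem B_zero : B 0 = gb := rfl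

theorem B_succ (i : ℕ) : B (i + 1) = ⁅ga, B i⁆ := by
  simp only [B, pow_succ', Module.End.mul_apply]
  rfl

theorem P_swap {i j : ℕ} (_h : i < j) : P j i = -P i j := (lie_skew _ _).symm
theorem P_self (i : ℕ) : P i i = 0 := lie_self _

theorem lie_P (i j : ℕ) : ⁅ga, P i j⁆ = P (i + 1) j + P i (j + 1) := by
  simp only [P, B_succ, leibniz_lie ga]

theorem P_lie (i j k : ℕ) : ⁅P i j, B k⁆ = -T k i j := (lie_skew _ _).symm

theorem T_jac {i j k : ℕ} (_h : i < j) (_h' : j < k) : T i j k = T j i k - T k i j := by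
  simp only [T, P]
  rw [leibniz_lie (B i), ← lie_skew (B k) ⁅B i, B j⁆]
  abel

theorem step (D : LieDerivation ℚ L2 L2) (i : ℕ) :
    D (B (i + 1)) = ⁅D ga, B i⁆ + ⁅ga, D (B i)⁆ := by
  rw [B_succ, LieDerivation.apply_lie_eq_add, add_comm]

theorem D_P (D : LieDerivation ℚ L2 L2) (i j : ℕ) :
    D (P i j) = ⁅B i, D (B j)⁆ + ⁅D (B i), B j⁆ := by
  rw [P, LieDerivation.apply_lie_eq_add]

/-- A derivation of the free Lie algebra killing both generators is zero. -/
theorem der_eq_zero (D : LieDerivation ℚ L2 L2) (ha : D ga = 0) (hb : D gb = 0) : D = 0 := by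
  let K : LieSubalgebra ℚ L2 :=
    { LinearMap.ker (D : L2 →ₗ[ℚ] L2) with
      lie_mem' := by
        intro x y hx hy
        have hx' : D x = 0 := hx
        have hy' : D y = 0 := hy
        change D ⁅x, y⁆ = 0
        rw [LieDerivation.apply_lie_eq_add, hx', hy', lie_zero, zero_lie, add_zero] }
  have hmem : ∀ i : Fin 2, FreeLieAlgebra.of ℚ i ∈ K := by
    intro i
    fin_cases i
    · exact ha
    · exact hb
  let f : L2 →ₗ⁅ℚ⁆ K := FreeLieAlgebra.lift ℚ (fun i => ⟨FreeLieAlgebra.of ℚ i, hmem i⟩)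
  have hf : K.incl.comp f = LieHom.id := by
    apply FreeLieAlgebra.hom_ext
    intro i
    simp [f]
  ext x
  have hx : ((f x : K) : L2) = x := LieHom.congr_fun hf x
  have h2 : D ((f x : K) : L2) = 0 := (f x).2
  rw [hx] at h2
  simpa using h2

theorem tab4 (D : LieDerivation ℚ L2 L2) (h : IsEpsDual 1 D) :
    D ga = B 4 ∧ D (B 0) = (1:ℚ) • P 0 3 + (-1:ℚ) • P 1 2 ∧
    D (B 1) = 0 ∧
    D (B 2) = (-1:ℚ) • P 1 4 ∧
    D (B 3) = (-1:ℚ) • P 1 5 + (-2:ℚ) • P 2 4 ∧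
    D (B 4) = (-1:ℚ) • P 1 6 + (-3:ℚ) • P 2 5 + (-3:ℚ) • P 3 4 ∧
    D (B 5) = (-1:ℚ) • P 1 7 + (-4:ℚ) • P 2 6 + (-6:ℚ) • P 3 5 ∧
    D (B 6) = (-1:ℚ) • P 1 8 + (-5:ℚ) • P 2 7 + (-10:ℚ) • P 3 6 + (-5:ℚ) • P 4 5 ∧
    D (B 7) = (-1:ℚ) • P 1 9 + (-6:ℚ) • P 2 8 + (-15:ℚ) • P 3 7 + (-14:ℚ) • P 4 6 ∧
    D (B 8) = (-1:ℚ) • P 1 10 + (-7:ℚ) • P 2 9 + (-21:ℚ) • P 3 8 + (-28:ℚ) • P 4 7 + (-14:ℚ) • P 5 6 ∧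
    D (B 9) = (-1:ℚ) • P 1 11 + (-8:ℚ) • P 2 10 + (-28:ℚ) • P 3 9 + (-48:ℚ) • P 4 8 + (-42:ℚ) • P 5 7 ∧
    D (B 10) = (-1:ℚ) • P 1 12 + (-9:ℚ) • P 2 11 + (-36:ℚ) • P 3 10 + (-75:ℚ) • P 4 9 + (-90:ℚ) • P 5 8 + (-42:ℚ) • P 6 7 := by
  have ha : D ga = B 4 := h.1
  have h0 : D (B 0) = (1:ℚ) • P 0 3 + (-1:ℚ) • P 1 2 := by
    refine h.2.trans ?_
    simp only [Finset.sum_range_succ, Finset.sum_range_zero, ← B_def, ← P_def, Nat.reduceMul, Nat.reduceAdd, Nat.reduceSub]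
    simp (disch := decide) only [P_swap]
    module
  have h1 : D (B 1) = 0 := by
    rw [step, ha, h0]
    simp only [lie_add, lie_smul, lie_zero, lie_P, ← P_def, Nat.reduceAdd, P_self]
    try simp (disch := decide) only [P_swap]
    module
  have h2 : D (B 2) = (-1:ℚ) • P 1 4 := by
    rw [step, ha, h1]
    simp only [lie_add, lie_smul, lie_zero, lie_P, ← P_def, Nat.reduceAdd, P_self]
    try simp (disch := decide) only [P_swap]
    module
  have h3 : D (B 3) = (-1:ℚ) • P 1 5 + (-2:ℚ) • P 2 4 := by
    rw [step, ha, h2]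
    simp only [lie_add, lie_smul, lie_zero, lie_P, ← P_def, Nat.reduceAdd, P_self]
    try simp (disch := decide) only [P_swap]
    module
  have h4 : D (B 4) = (-1:ℚ) • P 1 6 + (-3:ℚ) • P 2 5 + (-3:ℚ) • P 3 4 := by
    rw [step, ha, h3]
    simp only [lie_add, lie_smul, lie_zero, lie_P, ← P_def, Nat.reduceAdd, P_self]
    try simp (disch := decide) only [P_swap]
    module
  have h5 : D (B 5) = (-1:ℚ) • P 1 7 + (-4:ℚ) • P 2 6 + (-6:ℚ) • P 3 5 := by
    rw [step, ha, h4]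
    simp only [lie_add, lie_smul, lie_zero, lie_P, ← P_def, Nat.reduceAdd, P_self]
    try simp (disch := decide) only [P_swap]
    module
  have h6 : D (B 6) = (-1:ℚ) • P 1 8 + (-5:ℚ) • P 2 7 + (-10:ℚ) • P 3 6 + (-5:ℚ) • P 4 5 := by
    rw [step, ha, h5]
    simp only [lie_add, lie_smul, lie_zero, lie_P, ← P_def, Nat.reduceAdd, P_self]
    try simp (disch := decide) only [P_swap]
    module
  have h7 : D (B 7) = (-1:ℚ) • P 1 9 + (-6:ℚ) • P 2 8 + (-15:ℚ) • P 3 7 + (-14:ℚ) • P 4 6 := by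
    rw [step, ha, h6]
    simp only [lie_add, lie_smul, lie_zero, lie_P, ← P_def, Nat.reduceAdd, P_self]
    try simp (disch := decide) only [P_swap]
    module
  have h8 : D (B 8) = (-1:ℚ) • P 1 10 + (-7:ℚ) • P 2 9 + (-21:ℚ) • P 3 8 + (-28:ℚ) • P 4 7 + (-14:ℚ) • P 5 6 := by
    rw [step, ha, h7]
    simp only [lie_add, lie_smul, lie_zero, lie_P, ← P_def, Nat.reduceAdd, P_self]
    try simp (disch := decide) only [P_swap]
    module
  have h9 : D (B 9) = (-1:ℚ) • P 1 11 + (-8:ℚ) • P 2 10 + (-28:ℚ) • P 3 9 + (-48:ℚ) • P 4 8 + (-42:ℚ) • P 5 7 := by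
    rw [step, ha, h8]
    simp only [lie_add, lie_smul, lie_zero, lie_P, ← P_def, Nat.reduceAdd, P_self]
    try simp (disch := decide) only [P_swap]
    module
  have h10 : D (B 10) = (-1:ℚ) • P 1 12 + (-9:ℚ) • P 2 11 + (-36:ℚ) • P 3 10 + (-75:ℚ) • P 4 9 + (-90:ℚ) • P 5 8 + (-42:ℚ) • P 6 7 := by
    rw [step, ha, h9]
    simp only [lie_add, lie_smul, lie_zero, lie_P, ← P_def, Nat.reduceAdd, P_self]
    try simp (disch := decide) only [P_swap]
    module
  exact ⟨ha, h0, h1, h2, h3, h4, h5, h6, h7, h8, h9, h10⟩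

theorem tab6 (D : LieDerivation ℚ L2 L2) (h : IsEpsDual 2 D) :
    D ga = B 6 ∧ D (B 0) = (1:ℚ) • P 0 5 + (-1:ℚ) • P 1 4 + (1:ℚ) • P 2 3 ∧
    D (B 1) = 0 ∧
    D (B 2) = (-1:ℚ) • P 1 6 ∧
    D (B 3) = (-1:ℚ) • P 1 7 + (-2:ℚ) • P 2 6 ∧
    D (B 4) = (-1:ℚ) • P 1 8 + (-3:ℚ) • P 2 7 + (-3:ℚ) • P 3 6 ∧
    D (B 5) = (-1:ℚ) • P 1 9 + (-4:ℚ) • P 2 8 + (-6:ℚ) • P 3 7 + (-4:ℚ) • P 4 6 ∧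
    D (B 6) = (-1:ℚ) • P 1 10 + (-5:ℚ) • P 2 9 + (-10:ℚ) • P 3 8 + (-10:ℚ) • P 4 7 + (-5:ℚ) • P 5 6 ∧
    D (B 7) = (-1:ℚ) • P 1 11 + (-6:ℚ) • P 2 10 + (-15:ℚ) • P 3 9 + (-20:ℚ) • P 4 8 + (-15:ℚ) • P 5 7 ∧
    D (B 8) = (-1:ℚ) • P 1 12 + (-7:ℚ) • P 2 11 + (-21:ℚ) • P 3 10 + (-35:ℚ) • P 4 9 + (-35:ℚ) • P 5 8 + (-14:ℚ) • P 6 7 := by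
  have ha : D ga = B 6 := h.1
  have h0 : D (B 0) = (1:ℚ) • P 0 5 + (-1:ℚ) • P 1 4 + (1:ℚ) • P 2 3 := by
    refine h.2.trans ?_
    simp only [Finset.sum_range_succ, Finset.sum_range_zero, ← B_def, ← P_def, Nat.reduceMul, Nat.reduceAdd, Nat.reduceSub]
    simp (disch := decide) only [P_swap]
    module
  have h1 : D (B 1) = 0 := by
    rw [step, ha, h0]
    simp only [lie_add, lie_smul, lie_zero, lie_P, ← P_def, Nat.reduceAdd, P_self]
    try simp (disch := decide) only [P_swap]
    module
  have h2 : D (B 2) = (-1:ℚ) • P 1 6 := by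
    rw [step, ha, h1]
    simp only [lie_add, lie_smul, lie_zero, lie_P, ← P_def, Nat.reduceAdd, P_self]
    try simp (disch := decide) only [P_swap]
    module
  have h3 : D (B 3) = (-1:ℚ) • P 1 7 + (-2:ℚ) • P 2 6 := by
    rw [step, ha, h2]
    simp only [lie_add, lie_smul, lie_zero, lie_P, ← P_def, Nat.reduceAdd, P_self]
    try simp (disch := decide) only [P_swap]
    module
  have h4 : D (B 4) = (-1:ℚ) • P 1 8 + (-3:ℚ) • P 2 7 + (-3:ℚ) • P 3 6 := by
    rw [step, ha, h3]
    simp only [lie_add, lie_smul, lie_zero, lie_P, ← P_def, Nat.reduceAdd, P_self]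
    try simp (disch := decide) only [P_swap]
    module
  have h5 : D (B 5) = (-1:ℚ) • P 1 9 + (-4:ℚ) • P 2 8 + (-6:ℚ) • P 3 7 + (-4:ℚ) • P 4 6 := by
    rw [step, ha, h4]
    simp only [lie_add, lie_smul, lie_zero, lie_P, ← P_def, Nat.reduceAdd, P_self]
    try simp (disch := decide) only [P_swap]
    module
  have h6 : D (B 6) = (-1:ℚ) • P 1 10 + (-5:ℚ) • P 2 9 + (-10:ℚ) • P 3 8 + (-10:ℚ) • P 4 7 + (-5:ℚ) • P 5 6 := by
    rw [step, ha, h5]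
    simp only [lie_add, lie_smul, lie_zero, lie_P, ← P_def, Nat.reduceAdd, P_self]
    try simp (disch := decide) only [P_swap]
    module
  have h7 : D (B 7) = (-1:ℚ) • P 1 11 + (-6:ℚ) • P 2 10 + (-15:ℚ) • P 3 9 + (-20:ℚ) • P 4 8 + (-15:ℚ) • P 5 7 := by
    rw [step, ha, h6]
    simp only [lie_add, lie_smul, lie_zero, lie_P, ← P_def, Nat.reduceAdd, P_self]
    try simp (disch := decide) only [P_swap]
    module
  have h8 : D (B 8) = (-1:ℚ) • P 1 12 + (-7:ℚ) • P 2 11 + (-21:ℚ) • P 3 10 + (-35:ℚ) • P 4 9 + (-35:ℚ) • P 5 8 + (-14:ℚ) • P 6 7 := by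
    rw [step, ha, h7]
    simp only [lie_add, lie_smul, lie_zero, lie_P, ← P_def, Nat.reduceAdd, P_self]
    try simp (disch := decide) only [P_swap]
    module
  exact ⟨ha, h0, h1, h2, h3, h4, h5, h6, h7, h8⟩

theorem tab8 (D : LieDerivation ℚ L2 L2) (h : IsEpsDual 3 D) :
    D ga = B 8 ∧ D (B 0) = (1:ℚ) • P 0 7 + (-1:ℚ) • P 1 6 + (1:ℚ) • P 2 5 + (-1:ℚ) • P 3 4 ∧
    D (B 1) = 0 ∧
    D (B 2) = (-1:ℚ) • P 1 8 ∧
    D (B 3) = (-1:ℚ) • P 1 9 + (-2:ℚ) • P 2 8 ∧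
    D (B 4) = (-1:ℚ) • P 1 10 + (-3:ℚ) • P 2 9 + (-3:ℚ) • P 3 8 ∧
    D (B 5) = (-1:ℚ) • P 1 11 + (-4:ℚ) • P 2 10 + (-6:ℚ) • P 3 9 + (-4:ℚ) • P 4 8 ∧
    D (B 6) = (-1:ℚ) • P 1 12 + (-5:ℚ) • P 2 11 + (-10:ℚ) • P 3 10 + (-10:ℚ) • P 4 9 + (-5:ℚ) • P 5 8 := by
  have ha : D ga = B 8 := h.1
  have h0 : D (B 0) = (1:ℚ) • P 0 7 + (-1:ℚ) • P 1 6 + (1:ℚ) • P 2 5 + (-1:ℚ) • P 3 4 := by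
    refine h.2.trans ?_
    simp only [Finset.sum_range_succ, Finset.sum_range_zero, ← B_def, ← P_def, Nat.reduceMul, Nat.reduceAdd, Nat.reduceSub]
    simp (disch := decide) only [P_swap]
    module
  have h1 : D (B 1) = 0 := by
    rw [step, ha, h0]
    simp only [lie_add, lie_smul, lie_zero, lie_P, ← P_def, Nat.reduceAdd, P_self]
    try simp (disch := decide) only [P_swap]
    module
  have h2 : D (B 2) = (-1:ℚ) • P 1 8 := by
    rw [step, ha, h1]
    simp only [lie_add, lie_smul, lie_zero, lie_P, ← P_def, Nat.reduceAdd, P_self]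
    try simp (disch := decide) only [P_swap]
    module
  have h3 : D (B 3) = (-1:ℚ) • P 1 9 + (-2:ℚ) • P 2 8 := by
    rw [step, ha, h2]
    simp only [lie_add, lie_smul, lie_zero, lie_P, ← P_def, Nat.reduceAdd, P_self]
    try simp (disch := decide) only [P_swap]
    module
  have h4 : D (B 4) = (-1:ℚ) • P 1 10 + (-3:ℚ) • P 2 9 + (-3:ℚ) • P 3 8 := by
    rw [step, ha, h3]
    simp only [lie_add, lie_smul, lie_zero, lie_P, ← P_def, Nat.reduceAdd, P_self]
    try simp (disch := decide) only [P_swap]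
    module
  have h5 : D (B 5) = (-1:ℚ) • P 1 11 + (-4:ℚ) • P 2 10 + (-6:ℚ) • P 3 9 + (-4:ℚ) • P 4 8 := by
    rw [step, ha, h4]
    simp only [lie_add, lie_smul, lie_zero, lie_P, ← P_def, Nat.reduceAdd, P_self]
    try simp (disch := decide) only [P_swap]
    module
  have h6 : D (B 6) = (-1:ℚ) • P 1 12 + (-5:ℚ) • P 2 11 + (-10:ℚ) • P 3 10 + (-10:ℚ) • P 4 9 + (-5:ℚ) • P 5 8 := by
    rw [step, ha, h5]
    simp only [lie_add, lie_smul, lie_zero, lie_P, ← P_def, Nat.reduceAdd, P_self]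
    try simp (disch := decide) only [P_swap]
    module
  exact ⟨ha, h0, h1, h2, h3, h4, h5, h6⟩

theorem tab10 (D : LieDerivation ℚ L2 L2) (h : IsEpsDual 4 D) :
    D ga = B 10 ∧ D (B 0) = (1:ℚ) • P 0 9 + (-1:ℚ) • P 1 8 + (1:ℚ) • P 2 7 + (-1:ℚ) • P 3 6 + (1:ℚ) • P 4 5 ∧
    D (B 1) = 0 ∧
    D (B 2) = (-1:ℚ) • P 1 10 ∧
    D (B 3) = (-1:ℚ) • P 1 11 + (-2:ℚ) • P 2 10 ∧
    D (B 4) = (-1:ℚ) • P 1 12 + (-3:ℚ) • P 2 11 + (-3:ℚ) • P 3 10 := by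
  have ha : D ga = B 10 := h.1
  have h0 : D (B 0) = (1:ℚ) • P 0 9 + (-1:ℚ) • P 1 8 + (1:ℚ) • P 2 7 + (-1:ℚ) • P 3 6 + (1:ℚ) • P 4 5 := by
    refine h.2.trans ?_
    simp only [Finset.sum_range_succ, Finset.sum_range_zero, ← B_def, ← P_def, Nat.reduceMul, Nat.reduceAdd, Nat.reduceSub]
    simp (disch := decide) only [P_swap]
    module
  have h1 : D (B 1) = 0 := by
    rw [step, ha, h0]
    simp only [lie_add, lie_smul, lie_zero, lie_P, ← P_def, Nat.reduceAdd, P_self]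
    try simp (disch := decide) only [P_swap]
    module
  have h2 : D (B 2) = (-1:ℚ) • P 1 10 := by
    rw [step, ha, h1]
    simp only [lie_add, lie_smul, lie_zero, lie_P, ← P_def, Nat.reduceAdd, P_self]
    try simp (disch := decide) only [P_swap]
    module
  have h3 : D (B 3) = (-1:ℚ) • P 1 11 + (-2:ℚ) • P 2 10 := by
    rw [step, ha, h2]
    simp only [lie_add, lie_smul, lie_zero, lie_P, ← P_def, Nat.reduceAdd, P_self]
    try simp (disch := decide) only [P_swap]
    module
  have h4 : D (B 4) = (-1:ℚ) • P 1 12 + (-3:ℚ) • P 2 11 + (-3:ℚ) • P 3 10 := by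
    rw [step, ha, h3]
    simp only [lie_add, lie_smul, lie_zero, lie_P, ← P_def, Nat.reduceAdd, P_self]
    try simp (disch := decide) only [P_swap]
    module
  exact ⟨ha, h0, h1, h2, h3, h4⟩

theorem pollack_relation_depth_two_weight_twelve
    (D4 D6 D8 D10 : LieDerivation ℚ L2 L2)
    (h4 : IsEpsDual 1 D4) (h6 : IsEpsDual 2 D6)
    (h8 : IsEpsDual 3 D8) (h10 : IsEpsDual 4 D10) :
    ⁅D10, D4⁆ - 3 • ⁅D8, D6⁆ = 0 := by
  obtain ⟨pa, p0, p1, p2, p3, p4, p5, p6, p7, p8, p9, p10⟩ := tab4 D4 h4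
  obtain ⟨qa, q0, q1, q2, q3, q4, q5, q6, q7, q8⟩ := tab6 D6 h6
  obtain ⟨ra, r0, r1, r2, r3, r4, r5, r6⟩ := tab8 D8 h8
  obtain ⟨sa, s0, s1, s2, s3, s4⟩ := tab10 D10 h10
  apply der_eq_zero
  · rw [LieDerivation.sub_apply, LieDerivation.smul_apply, LieDerivation.lie_apply,
      LieDerivation.lie_apply, pa, qa, ra, sa, p10, q8, r6, s4]
    module
  · rw [LieDerivation.sub_apply, LieDerivation.smul_apply, LieDerivation.lie_apply,
      LieDerivation.lie_apply, ← B_zero, p0, q0, r0, s0]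
    simp only [map_add, map_smul, D_P]
    simp only [pa, p0, p1, p2, p3, p4, p5, p6, p7, p8, p9, p10, qa, q0, q1, q2, q3, q4, q5, q6, q7, q8, ra, r0, r1, r2, r3, r4, r5, r6, sa, s0, s1, s2, s3, s4, lie_zero, zero_lie, lie_add, add_lie, lie_smul, smul_lie, ← T_def, P_lie]
    simp (disch := decide) only [T_jac]
    module
end
end

section
/- Let n ≥ 1 and 0 ≤ k ≤ 2n. Let D be a Lie derivation of L of type ε^∨_{2n+2} and let D₀^∨ be a Lie derivation of type ε₀^∨. Then the derivation δ := (ad D₀^∨)^k(D) maps all of L into the Lie ideal of L generated by the generator 𝖻: for every x ∈ L, δ(x) lies in the smallest Lie ideal of L containing 𝖻. -/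
open scoped BigOperators

noncomputable section

/-- A derivation sending both generators into a Lie ideal sends everything into it. -/
theorem deriv_mem_of_gens (I : LieIdeal ℚ L2) (δ : LieDerivation ℚ L2 L2)
    (ha : δ ga ∈ I) (hb : δ gb ∈ I) (x : L2) : δ x ∈ I := by
  let S : LieSubalgebra ℚ L2 :=
    { (I.toSubmodule.comap (δ : L2 →ₗ[ℚ] L2)) with
      lie_mem' := by
        intro x y hx hy
        have hx' : δ x ∈ I := hx
        have hy' : δ y ∈ I := hy
        change δ ⁅x, y⁆ ∈ I
        rw [LieDerivation.apply_lie_eq_add]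
        exact add_mem (lie_mem_right ℚ L2 I _ _ hy') (lie_mem_left ℚ L2 I _ _ hx') }
  have hg : ∀ i : Fin 2, FreeLieAlgebra.of ℚ i ∈ S := by
    intro i
    fin_cases i
    · exact ha
    · exact hb
  let f : L2 →ₗ⁅ℚ⁆ S := FreeLieAlgebra.lift ℚ (fun i => ⟨FreeLieAlgebra.of ℚ i, hg i⟩)
  have hf : S.incl.comp f = LieHom.id := by
    apply FreeLieAlgebra.hom_ext
    intro i
    simp [f, FreeLieAlgebra.lift_of_apply]
  have hx : (f x : L2) = x := congrArg (fun g : L2 →ₗ⁅ℚ⁆ L2 => g x) hf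
  have := (f x).2
  rw [hx] at this
  exact this

theorem adL_pow_mem (I : LieIdeal ℚ L2) (x y : L2) (hy : y ∈ I) (m : ℕ) :
    (adL x ^ m) y ∈ I := by
  induction m with
  | zero => simpa using hy
  | succ m ih =>
    rw [pow_succ', Module.End.mul_apply]
    exact lie_mem_right ℚ L2 I _ _ ih

theorem epsDual_image_in_ideal_of_b (n k : ℕ) (hn : 1 ≤ n) (hk : k ≤ 2 * n)
    (D D0 : LieDerivation ℚ L2 L2)
    (hD : IsEpsDual n D) (hD0 : IsEpsZeroDual D0) :
    ∀ x : L2,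
      ((LieAlgebra.ad ℚ (LieDerivation ℚ L2 L2) D0 ^ k) D) x ∈
        LieSubmodule.lieSpan ℚ L2 ({gb} : Set L2) := by
  have hgb : gb ∈ LieSubmodule.lieSpan ℚ L2 ({gb} : Set L2) :=
    LieSubmodule.subset_lieSpan (Set.mem_singleton gb)
  generalize LieSubmodule.lieSpan ℚ L2 ({gb} : Set L2) = I at hgb ⊢
  have h0 : ∀ x, D0 x ∈ I := by
    apply deriv_mem_of_gens I D0
    · rw [hD0.1]; exact hgb
    · rw [hD0.2]; exact zero_mem I
  have h1 : ∀ x, D x ∈ I := by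
    apply deriv_mem_of_gens I D
    · rw [hD.1]; exact adL_pow_mem I _ _ hgb _
    · rw [hD.2]
      refine I.smul_mem _ (sum_mem fun i _ => I.smul_mem _ ?_)
      exact lie_mem_right ℚ L2 I _ _ (adL_pow_mem I _ _ hgb _)
  clear hk
  induction k with
  | zero => simpa using h1
  | succ k ih =>
    intro x
    rw [pow_succ', Module.End.mul_apply, LieAlgebra.ad_apply, LieDerivation.commutator_apply]
    exact sub_mem (h0 _) (ih _)
end
end
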